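/- arXiv:1410.8632 — 2 statements merged into one kernel-verified Lean document; each statement's English description precedes it below -/
import Mathlib

section
/- Let P ⊆ ℝ^d be a polytope, i.e., the convex hull of a finite set of points. For each extreme point v of P, let T_v = {v + w : w ∈ ℝ^d and there exists ε > 0 with v + ε·w ∈ P} be the supporting cone of P at v. Then the function 𝟙_P − Σ_{v ∈ ext(P)} 𝟙_{T_v}, where the (finite) sum runs over the extreme points of P, belongs to the ℝ-linear span of the set of indicator functions 𝟙_{s + C}, where s ranges over ℝ^d and C ranges over polyhedral cones in ℝ^d containing a line. -/
open Filter Topology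

namespace BrionCone

section Polyhedra

theorem indicator_one_congr {X Y : Type*} {A : Set X} {B : Set Y} {x : X} {y : Y}
    (h : x ∈ A ↔ y ∈ B) :
    A.indicator (fun _ => (1 : ℝ)) x = B.indicator (fun _ => (1 : ℝ)) y := by
  by_cases hx : x ∈ A <;> simp [hx, h.mp, mt h.mpr]

universe u

variable {E : Type u} [AddCommGroup E] [Module ℝ E]

/-- Intersection of finitely many affine halfspaces. -/
def IsPolyhedron (Q : Set E) : Prop :=
  ∃ (ι : Type) (_ : Finite ι) (ν : ι → E →ₗ[ℝ] ℝ) (a : ι → ℝ), Q = {x | ∀ i, ν i x ≤ a i}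

/-- Translate of a polyhedral cone. -/
def IsShiftedCone (Q : Set E) : Prop :=
  ∃ (ι : Type) (_ : Finite ι) (ν : ι → E →ₗ[ℝ] ℝ) (s : E), Q = {x | ∀ i, ν i (x - s) ≤ 0}

variable (E) in
/-- Span of the indicator functions of translates of polyhedral cones. -/
def coneSpan : Submodule ℝ (E → ℝ) :=
  Submodule.span ℝ {f | ∃ Q : Set E, IsShiftedCone Q ∧ f = Q.indicator fun _ => 1}

variable (E) in
/-- Span of the indicator functions of translates of polyhedral cones containing a line. -/
def lineConeSpan : Submodule ℝ (E → ℝ) :=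
  Submodule.span ℝ {f | ∃ (ι : Type) (_ : Finite ι) (ν : ι → E →ₗ[ℝ] ℝ) (s w : E),
    w ≠ 0 ∧ (∀ i, ν i w = 0) ∧ f = {x | ∀ i, ν i (x - s) ≤ 0}.indicator fun _ => 1}

theorem IsShiftedCone.indicator_mem {Q : Set E} (hQ : IsShiftedCone Q) :
    (Q.indicator fun _ => (1 : ℝ)) ∈ coneSpan E :=
  Submodule.subset_span ⟨Q, hQ, rfl⟩

/-- A linear operator on functions maps `coneSpan` into `coneSpan` as soon as it does so on
indicators of shifted cones. -/
theorem map_coneSpan_le {F : Type u} [AddCommGroup F] [Module ℝ F]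
    (L : (F → ℝ) →ₗ[ℝ] (E → ℝ))
    (hL : ∀ Q : Set F, IsShiftedCone Q → L (Q.indicator fun _ => 1) ∈ coneSpan E)
    {f : F → ℝ} (hf : f ∈ coneSpan F) : L f ∈ coneSpan E := by
  have : coneSpan F ≤ (coneSpan E).comap L := by
    refine Submodule.span_le.2 ?_
    rintro _ ⟨Q, hQ, rfl⟩
    exact hL Q hQ
  exact this hf

/-- The operator `f ↦ 𝟙_A · (f ∘ g)`. -/
noncomputable def restrictComp {X Y : Type*} (A : Set X) (g : X → Y) : (Y → ℝ) →ₗ[ℝ] (X → ℝ) where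
  toFun f := A.indicator fun x => f (g x)
  map_add' f₁ f₂ := by
    ext x; by_cases h : x ∈ A <;> simp [h]
  map_smul' c f := by
    ext x; by_cases h : x ∈ A <;> simp [h]

theorem restrictComp_indicator {X Y : Type*} (A : Set X) (g : X → Y) (Q : Set Y) :
    restrictComp A g (Q.indicator fun _ => 1) = (A ∩ g ⁻¹' Q).indicator fun _ => 1 := by
  ext x
  by_cases h : x ∈ A <;> by_cases h' : g x ∈ Q <;> simp [restrictComp, h, h', Set.indicator]

theorem comp_sub_mem_coneSpan {f : E → ℝ} (hf : f ∈ coneSpan E) (s : E) :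
    (fun x => f (x - s)) ∈ coneSpan E := by
  have := map_coneSpan_le (restrictComp Set.univ fun x : E => x - s) (fun Q hQ => ?_) hf
  · simpa [restrictComp] using this
  · rw [restrictComp_indicator]
    obtain ⟨ι, hι, μ, t, rfl⟩ := hQ
    refine IsShiftedCone.indicator_mem ⟨ι, hι, μ, s + t, ?_⟩
    ext x
    simp [add_comm]

section Hyperplane

variable (ν : E →ₗ[ℝ] ℝ) (p : E) (hp : ν p = 1)

/-- The projection onto `ker ν` along `p`. -/
def kerProj : E →ₗ[ℝ] LinearMap.ker ν :=
  LinearMap.codRestrict _ (LinearMap.id - ν.smulRight p) (by intro x; simp [hp])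

@[simp] theorem coe_kerProj (x : E) : (kerProj ν p hp x : E) = x - ν x • p := rfl

theorem hyperplane_mem_coneSpan {f : LinearMap.ker ν → ℝ} (hf : f ∈ coneSpan (LinearMap.ker ν)) :
    restrictComp {x | ν x = 1} (kerProj ν p hp) f ∈ coneSpan E := by
  refine map_coneSpan_le _ (fun Q hQ => ?_) hf
  rw [restrictComp_indicator]
  obtain ⟨ι, hι, μ, t, rfl⟩ := hQ
  have ht : ν t = 0 := t.2
  refine IsShiftedCone.indicator_mem ⟨Option (Option ι), inferInstance,
    fun o => o.elim ν fun o => o.elim (-ν) fun i => μ i ∘ₗ kerProj ν p hp, p + t, ?_⟩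
  have key : ∀ x, kerProj ν p hp (x - (p + t)) = kerProj ν p hp x - t := by
    intro x; ext; simp [hp, ht]
  ext x
  simp only [Set.mem_inter_iff, Set.mem_ofPred_eq, Set.mem_preimage, Option.forall, Option.elim,
    LinearMap.comp_apply, key, LinearMap.neg_apply, ← and_assoc]
  refine and_congr_left fun _ => ?_
  simp only [map_sub, map_add, hp, ht]
  constructor
  · intro h; constructor <;> linarith
  · intro h; linarith [h.1, h.2]

theorem upperHalfspace_mem_coneSpan {f : LinearMap.ker ν → ℝ}
    (hf : f ∈ coneSpan (LinearMap.ker ν)) :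
    restrictComp {x | 1 ≤ ν x} (fun x => (ν x)⁻¹ • kerProj ν p hp x) f ∈ coneSpan E := by
  refine map_coneSpan_le _ (fun Q hQ => ?_) hf
  rw [restrictComp_indicator]
  obtain ⟨ι, hι, μ, t, rfl⟩ := hQ
  have ht : ν t = 0 := t.2
  refine IsShiftedCone.indicator_mem ⟨Option ι, inferInstance,
    fun o => o.elim (-ν) fun i => μ i ∘ₗ (kerProj ν p hp - ν.smulRight t), p + t, ?_⟩
  ext x
  simp only [Set.mem_inter_iff, Set.mem_ofPred_eq, Set.mem_preimage, Option.forall, Option.elim,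
    LinearMap.comp_apply, LinearMap.neg_apply]
  rw [show -ν (x - (p + t)) ≤ 0 ↔ 1 ≤ ν x by simp [hp, ht]]
  refine and_congr_right fun hx => forall_congr' fun i => ?_
  have hx0 : 0 < ν x := by linarith
  have key : (kerProj ν p hp - ν.smulRight t) (x - (p + t)) =
      ν x • ((ν x)⁻¹ • kerProj ν p hp x - t) := by
    rw [smul_sub, smul_inv_smul₀ hx0.ne']
    ext
    simp [hp, ht, sub_smul]
  rw [key, map_smul, smul_eq_mul, mul_nonpos_iff_pos_imp_nonpos]
  simp [hx0, hx0.le]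

end Hyperplane

/-- Cutting a combination of shifted cones with an affine halfspace, provided that polyhedra in
linear hyperplanes are already known to be combinations of shifted cones. -/
theorem indicator_halfspace_mem_coneSpan
    (IH : ∀ ν : E →ₗ[ℝ] ℝ, ν ≠ 0 → ∀ Q : Set (LinearMap.ker ν), IsPolyhedron Q →
      (Q.indicator fun _ => (1 : ℝ)) ∈ coneSpan (LinearMap.ker ν))
    (ν : E →ₗ[ℝ] ℝ) (a : ℝ) {f : E → ℝ} (hf : f ∈ coneSpan E) :
    {x | ν x ≤ a}.indicator f ∈ coneSpan E := by
  refine map_coneSpan_le (restrictComp {x | ν x ≤ a} id) (fun Q hQ => ?_) hf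
  rw [restrictComp_indicator]
  obtain ⟨ι, hι, μ, s, rfl⟩ := hQ
  -- slices of the cone `{μ ≤ 0}` at height one
  have slices : ∀ ρ : E →ₗ[ℝ] ℝ,
      ({x | ρ x = 1 ∧ ∀ i, μ i x ≤ 0}.indicator fun _ => (1 : ℝ)) ∈ coneSpan E ∧
      ({x | 1 ≤ ρ x ∧ ∀ i, μ i x ≤ 0}.indicator fun _ => (1 : ℝ)) ∈ coneSpan E := by
    intro ρ
    by_cases hρ : ρ = 0
    · subst hρ
      have h1 : {x : E | (0 : E →ₗ[ℝ] ℝ) x = 1 ∧ ∀ i, μ i x ≤ 0} = ∅ := by ext; simp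
      have h2 : {x : E | 1 ≤ (0 : E →ₗ[ℝ] ℝ) x ∧ ∀ i, μ i x ≤ 0} = ∅ := by
        ext; simp
      rw [h1, h2, Set.indicator_empty]
      exact ⟨zero_mem _, zero_mem _⟩
    · obtain ⟨p, hp⟩ : ∃ p, ρ p = 1 := LinearMap.surjective hρ 1
      have hQ := IH ρ hρ {z | ∀ i, (μ i ∘ₗ (LinearMap.ker ρ).subtype) z ≤ - μ i p}
        ⟨ι, hι, _, _, rfl⟩
      have h1 := hyperplane_mem_coneSpan ρ p hp hQ
      have h2 := upperHalfspace_mem_coneSpan ρ p hp hQ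
      rw [restrictComp_indicator] at h1 h2
      constructor
      · convert h1 using 3
        ext x
        refine and_congr_right fun hx => forall_congr' fun i => ?_
        simp [hx]
      · convert h2 using 3
        ext x
        refine and_congr_right fun hx => forall_congr' fun i => ?_
        have hx0 : 0 < ρ x := by linarith
        have : (μ i) ((ρ x)⁻¹ • (x - ρ x • p)) = (ρ x)⁻¹ * μ i x - μ i p := by
          simp [mul_sub, hx0.ne']
        simp only [LinearMap.comp_apply, Submodule.subtype_apply, SetLike.val_smul, coe_kerProj,
          this]
        rw [sub_le_iff_le_add, neg_add_cancel, mul_nonpos_iff_pos_imp_nonpos]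
        simp [hx0, hx0.le]
  suffices h : ({x | ν x ≤ a - ν s ∧ ∀ i, μ i x ≤ 0}.indicator fun _ => (1 : ℝ)) ∈ coneSpan E by
    convert comp_sub_mem_coneSpan h s using 1
    ext x
    refine indicator_one_congr (and_congr ?_ Iff.rfl)
    simp
  rcases lt_trichotomy (a - ν s) 0 with hb | hb | hb
  · convert (slices ((a - ν s)⁻¹ • ν)).2 using 3
    ext x
    refine and_congr_left fun _ => ?_
    rw [LinearMap.smul_apply, smul_eq_mul, inv_mul_eq_div, le_div_iff_of_neg hb, one_mul]
  · refine IsShiftedCone.indicator_mem ⟨Option ι, inferInstance, fun o => o.elim ν μ, 0, ?_⟩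
    ext x
    simp [hb, Option.forall]
  · have hC : ({x | ∀ i, μ i x ≤ 0}.indicator fun _ => (1 : ℝ)) ∈ coneSpan E :=
      IsShiftedCone.indicator_mem ⟨ι, hι, μ, 0, by simp⟩
    classical
    obtain ⟨h1, h2⟩ := slices ((a - ν s)⁻¹ • ν)
    convert add_mem (sub_mem hC h2) h1 using 1
    ext x
    have e1 : ν x = a - ν s ↔ ((a - ν s)⁻¹ • ν) x = 1 := by
      rw [LinearMap.smul_apply, smul_eq_mul, inv_mul_eq_div, div_eq_one_iff_eq hb.ne']
    have e2 : a - ν s ≤ ν x ↔ 1 ≤ ((a - ν s)⁻¹ • ν) x := by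
      rw [LinearMap.smul_apply, smul_eq_mul, inv_mul_eq_div, le_div_iff₀ hb, one_mul]
    simp only [Pi.add_apply, Pi.sub_apply, Set.indicator_apply, Set.mem_ofPred_eq, ← e1, ← e2]
    by_cases hx : ∀ i, μ i x ≤ 0
    · simp only [hx, implies_true, and_true]
      rcases lt_trichotomy (ν x) (a - ν s) with h | h | h
      · simp [h.le, h.ne, h.not_ge]
      · simp [h]
      · simp [h.le, h.ne', h.not_ge]
    · simp [hx]

theorem IsPolyhedron.indicator_mem_coneSpan_of_finrank (n : ℕ) :
    ∀ (E : Type u) [AddCommGroup E] [Module ℝ E] [FiniteDimensional ℝ E],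
      Module.finrank ℝ E = n → ∀ Q : Set E, IsPolyhedron Q →
        (Q.indicator fun _ => (1 : ℝ)) ∈ coneSpan E := by
  induction n using Nat.strong_induction_on with
  | _ n ih =>
    intro E _ _ _ hE Q hQ
    have IH : ∀ ν : E →ₗ[ℝ] ℝ, ν ≠ 0 → ∀ Q : Set (LinearMap.ker ν), IsPolyhedron Q →
        (Q.indicator fun _ => (1 : ℝ)) ∈ coneSpan (LinearMap.ker ν) := by
      intro ν hν Q hQ
      refine ih _ ?_ _ rfl Q hQ
      rw [← hE]
      exact Submodule.finrank_lt (by rwa [Ne, LinearMap.ker_eq_top])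
    obtain ⟨ι, hι, ν, a, rfl⟩ := hQ
    have := Fintype.ofFinite ι
    classical
    suffices h : ∀ t : Finset ι,
        ({x : E | ∀ i ∈ t, ν i x ≤ a i}.indicator fun _ => (1 : ℝ)) ∈ coneSpan E by
      simpa using h Finset.univ
    intro t
    induction t using Finset.induction_on with
    | empty =>
      exact IsShiftedCone.indicator_mem ⟨Empty, inferInstance, Empty.elim, 0, by simp⟩
    | insert i t hi iht =>
      convert indicator_halfspace_mem_coneSpan IH (ν i) (a i) iht using 1
      rw [Set.indicator_indicator]
      congr 1
      ext x
      simp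

theorem IsPolyhedron.indicator_mem_coneSpan [FiniteDimensional ℝ E] {Q : Set E}
    (hQ : IsPolyhedron Q) : (Q.indicator fun _ => (1 : ℝ)) ∈ coneSpan E :=
  IsPolyhedron.indicator_mem_coneSpan_of_finrank _ E rfl Q hQ

section LocalCone

variable {ι : Type} (ν : ι → E →ₗ[ℝ] ℝ) (a : ι → ℝ) (v : E)

/-- The supporting cone at `v` of the polyhedron `{ν i ≤ a i}`; empty if `v` is not in it. -/
def localCone : Set E :=
  {y | (∀ i, ν i v ≤ a i) ∧ ∀ i, ν i v = a i → ν i (y - v) ≤ 0}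

theorem eventually_mem_iff_mem_localCone [Finite ι] (y : E) :
    ∀ᶠ ε : ℝ in 𝓝[>] 0,
      (v + ε • (y - v) ∈ {x | ∀ i, ν i x ≤ a i} ↔ y ∈ localCone ν a v) := by
  have key : ∀ i, ∀ᶠ ε : ℝ in 𝓝[>] 0, (ν i (v + ε • (y - v)) ≤ a i ↔
      (ν i v ≤ a i ∧ (ν i v = a i → ν i (y - v) ≤ 0))) := by
    intro i
    have lim : Tendsto (fun ε : ℝ => ν i (v + ε • (y - v))) (𝓝[>] 0) (𝓝 (ν i v)) := by
      have : Continuous fun ε : ℝ => ν i v + ε * ν i (y - v) := by fun_prop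
      have h := (this.tendsto 0).mono_left (nhdsWithin_le_nhds (s := Set.Ioi 0))
      simpa [mul_sub] using h
    rcases lt_trichotomy (ν i v) (a i) with h | h | h
    · filter_upwards [lim.eventually_lt_const h] with ε hε
      simp only [hε.le, h.le, h.ne, true_and, false_imp_iff]
    · filter_upwards [self_mem_nhdsWithin] with ε hε
      have hε : (0 : ℝ) < ε := hε
      rw [map_add, map_smul, h, smul_eq_mul, add_le_iff_nonpos_right,
        mul_nonpos_iff_pos_imp_nonpos]
      simp [hε, hε.le]
    · filter_upwards [lim.eventually_const_lt h] with ε hε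
      simp only [hε.not_ge, h.not_ge, false_and]
  filter_upwards [eventually_all.2 key] with ε hε
  simp only [localCone, Set.mem_ofPred_eq, hε, forall_and]

theorem localCone_indicator_mem_lineConeSpan [Finite ι]
    (h : (∀ i, ν i v ≤ a i) →
      ∃ w ≠ 0, (∀ i, ν i (v + w) ≤ a i) ∧ ∀ i, ν i (v - w) ≤ a i) :
    ((localCone ν a v).indicator fun _ => (1 : ℝ)) ∈ lineConeSpan E := by
  by_cases hv : ∀ i, ν i v ≤ a i
  · obtain ⟨w, hw, h1, h2⟩ := h hv
    refine Submodule.subset_span ⟨{i // ν i v = a i}, inferInstance, fun i => ν i, v, w, hw, ?_, ?_⟩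
    · rintro ⟨i, hi⟩
      have := h1 i
      have := h2 i
      simp only [map_add, map_sub] at *
      linarith
    · congr 1
      ext y
      simp only [localCone, Set.mem_ofPred_eq, hv, Subtype.forall, true_and, implies_true]
  · have : localCone ν a v = ∅ := by
      ext y; simp only [localCone, Set.mem_ofPred_eq, hv, false_and]; simp
    rw [this, Set.indicator_empty]
    exact zero_mem _

end LocalCone

/-- Every combination `f` of shifted cones agrees, modulo cones containing a line, with the sum of
its germs at the points of any large enough finite set. -/
theorem exists_sub_sum_germ_mem_lineConeSpan {f : E → ℝ} (hf : f ∈ coneSpan E) :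
    ∃ V₀ : Finset E, ∀ V : Finset E, V₀ ⊆ V → ∃ g : E → E → ℝ,
      (∀ v y, ∀ᶠ ε : ℝ in 𝓝[>] 0, f (v + ε • (y - v)) = g v y) ∧
      f - ∑ v ∈ V, g v ∈ lineConeSpan E := by
  classical
  induction hf using Submodule.span_induction with
  | mem f hf =>
    obtain ⟨_, ⟨ι, hι, ν, s, rfl⟩, rfl⟩ := hf
    have hQ : {x : E | ∀ i, ν i (x - s) ≤ 0} = {x | ∀ i, ν i x ≤ ν i s} := by
      ext; simp
    rw [hQ]
    refine ⟨{s}, fun V hV => ⟨fun v => (localCone ν (fun i => ν i s) v).indicator fun _ => 1,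
      fun v y => ?_, ?_⟩⟩
    · filter_upwards [eventually_mem_iff_mem_localCone ν (fun i => ν i s) v y] with ε hε
      exact indicator_one_congr hε
    · have hs : localCone ν (fun i => ν i s) s = {x | ∀ i, ν i x ≤ ν i s} := by
        ext; simp [localCone]
      rw [← Finset.add_sum_erase _ _ (hV (Finset.mem_singleton_self s)), hs, sub_add_cancel_left]
      refine neg_mem (sum_mem fun v hv => ?_)
      refine localCone_indicator_mem_lineConeSpan _ _ _ fun hvs =>
        ⟨v - s, sub_ne_zero.2 (Finset.ne_of_mem_erase hv), fun i => ?_, fun i => by simp⟩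
      have := hvs i
      simp only [map_add, map_sub]
      linarith
  | zero => exact ⟨∅, fun V _ => ⟨0, fun v y => by simp, by simp⟩⟩
  | add f₁ f₂ _ _ h₁ h₂ =>
    obtain ⟨V₁, h₁⟩ := h₁
    obtain ⟨V₂, h₂⟩ := h₂
    refine ⟨V₁ ∪ V₂, fun V hV => ?_⟩
    obtain ⟨g₁, hg₁, hL₁⟩ := h₁ V (Finset.union_subset_left hV)
    obtain ⟨g₂, hg₂, hL₂⟩ := h₂ V (Finset.union_subset_right hV)
    refine ⟨g₁ + g₂, fun v y => ?_, ?_⟩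
    · filter_upwards [hg₁ v y, hg₂ v y] with ε e₁ e₂
      simp [e₁, e₂]
    · convert add_mem hL₁ hL₂ using 1
      simp only [Pi.add_apply, Finset.sum_add_distrib]
      abel
  | smul c f _ h =>
    obtain ⟨V₀, h⟩ := h
    refine ⟨V₀, fun V hV => ?_⟩
    obtain ⟨g, hg, hL⟩ := h V hV
    refine ⟨c • g, fun v y => ?_, ?_⟩
    · filter_upwards [hg v y] with ε e
      simp [e]
    · convert Submodule.smul_mem _ c hL using 1
      simp only [Pi.smul_apply, smul_sub, Finset.smul_sum]

/-- A polyhedron agrees, modulo cones containing a line, with the sum of its supporting cones over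
any finite set containing all its points that are not midpoints of nondegenerate segments in it. -/
theorem indicator_sub_sum_localCone_mem_lineConeSpan [FiniteDimensional ℝ E] {ι : Type} [Finite ι]
    (ν : ι → E →ₗ[ℝ] ℝ) (a : ι → ℝ) (X : Finset E)
    (hX : ∀ v, (∀ i, ν i v ≤ a i) → v ∉ X →
      ∃ w ≠ 0, (∀ i, ν i (v + w) ≤ a i) ∧ ∀ i, ν i (v - w) ≤ a i) :
    (({x | ∀ i, ν i x ≤ a i}.indicator fun _ => (1 : ℝ)) -
      ∑ v ∈ X, (localCone ν a v).indicator fun _ => (1 : ℝ)) ∈ lineConeSpan E := by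
  classical
  obtain ⟨V₀, hV₀⟩ := exists_sub_sum_germ_mem_lineConeSpan
    (IsPolyhedron.indicator_mem_coneSpan (Q := {x | ∀ i, ν i x ≤ a i}) ⟨ι, inferInstance, ν, a, rfl⟩)
  obtain ⟨g, hg, hL⟩ := hV₀ (V₀ ∪ X) Finset.subset_union_left
  have hg' : ∀ v, g v = (localCone ν a v).indicator fun _ => 1 := by
    intro v
    ext y
    obtain ⟨ε, h1, h2⟩ := ((hg v y).and (eventually_mem_iff_mem_localCone ν a v y)).exists
    rw [← h1]
    exact indicator_one_congr h2
  simp only [hg'] at hL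
  rw [← Finset.sum_sdiff (Finset.subset_union_right : X ⊆ V₀ ∪ X), ← sub_sub,
    sub_right_comm] at hL
  refine (Submodule.sub_mem_iff_left _ (sum_mem fun v hv => ?_)).1 hL
  exact localCone_indicator_mem_lineConeSpan _ _ _ fun h => hX v h (Finset.mem_sdiff.1 hv).2

/-- Adding a ray to a polyhedral cone gives a polyhedral cone (Fourier–Motzkin elimination). -/
theorem exists_polyhedralCone_add_ray {ι : Type} [Finite ι] (μ : ι → E →ₗ[ℝ] ℝ) (a : E) :
    ∃ (κ : Type) (_ : Finite κ) (ρ : κ → E →ₗ[ℝ] ℝ),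
      {x | ∃ t : ℝ, 0 ≤ t ∧ ∀ i, μ i (x - t • a) ≤ 0} = {x | ∀ k, ρ k x ≤ 0} := by
  classical
  have := Fintype.ofFinite ι
  refine ⟨{i // μ i a ≤ 0} ⊕ {i // 0 < μ i a} × {j // μ j a < 0}, inferInstance,
    Sum.elim (fun i => μ i) fun k => μ k.1 a • μ k.2 - μ k.2 a • μ k.1, ?_⟩
  ext x
  simp only [Set.mem_ofPred_eq, Sum.forall, Sum.elim_inl, Sum.elim_inr, Subtype.forall,
    Prod.forall, LinearMap.sub_apply, LinearMap.smul_apply, smul_eq_mul, map_sub, map_smul]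
  constructor
  · rintro ⟨t, ht, h⟩
    refine ⟨fun i hi => ?_, fun i hi j hj => ?_⟩
    · nlinarith [h i]
    · nlinarith [mul_nonneg hi.le (sub_nonneg.2 (h j)),
        mul_nonneg (neg_nonneg.2 hj.le) (sub_nonneg.2 (h i))]
  · rintro ⟨h1, h2⟩
    -- the smallest admissible coefficient
    set L : Finset ℝ := insert 0 ((Finset.univ.filter fun i => 0 < μ i a).image
      fun i => μ i x / μ i a)
    have hne : L.Nonempty := Finset.insert_nonempty _ _
    refine ⟨L.max' hne, L.le_max' 0 (Finset.mem_insert_self _ _), fun i => ?_⟩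
    rcases lt_trichotomy (μ i a) 0 with hi | hi | hi
    · rcases Finset.mem_insert.1 (L.max'_mem hne) with h0 | hmem
      · rw [h0, zero_mul, sub_zero]
        exact h1 i hi.le
      · obtain ⟨j, hj, hje⟩ := Finset.mem_image.1 hmem
        have hj : 0 < μ j a := (Finset.mem_filter.1 hj).2
        rw [← hje, div_mul_eq_mul_div, sub_nonpos, le_div_iff₀ hj]
        linarith [h2 j hj i hi]
    · rw [hi, mul_zero, sub_zero]
      exact h1 i hi.le
    · have : μ i x / μ i a ≤ L.max' hne := L.le_max' _ (Finset.mem_insert_of_mem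
        (Finset.mem_image_of_mem _ (Finset.mem_filter.2 ⟨Finset.mem_univ _, hi⟩)))
      rw [div_le_iff₀ hi] at this
      linarith

/-- A finitely generated cone is polyhedral. -/
theorem exists_polyhedralCone_eq_conicHull [FiniteDimensional ℝ E] {κ : Type*} (S : Finset κ)
    (g : κ → E) :
    ∃ (ι : Type) (_ : Finite ι) (μ : ι → E →ₗ[ℝ] ℝ),
      {x | ∃ c : κ → ℝ, (∀ k ∈ S, 0 ≤ c k) ∧ ∑ k ∈ S, c k • g k = x} = {x | ∀ i, μ i x ≤ 0} := by
  classical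
  induction S using Finset.induction_on with
  | empty =>
    let b := Module.finBasis ℝ E
    refine ⟨Fin (Module.finrank ℝ E) ⊕ Fin (Module.finrank ℝ E), inferInstance,
      Sum.elim (fun i => b.coord i) fun i => -b.coord i, ?_⟩
    ext x
    simp only [Finset.notMem_empty, Finset.sum_empty, Set.mem_ofPred_eq, Sum.forall, Sum.elim_inl,
      Sum.elim_inr, LinearMap.neg_apply, neg_nonpos, ← forall_and, ← le_antisymm_iff]
    rw [b.forall_coord_eq_zero_iff]
    simp [eq_comm]
  | insert k S hk ih =>
    obtain ⟨ι, hι, μ, hμ⟩ := ih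
    obtain ⟨κ', hκ', ρ, hρ⟩ := exists_polyhedralCone_add_ray μ (g k)
    refine ⟨κ', hκ', ρ, ?_⟩
    rw [← hρ]
    ext x
    have hmem : ∀ y, (∃ c : κ → ℝ, (∀ k ∈ S, 0 ≤ c k) ∧ ∑ k ∈ S, c k • g k = y) ↔
        ∀ i, μ i y ≤ 0 := fun y => Set.ext_iff.1 hμ y
    simp only [Set.mem_ofPred_eq, ← hmem, Finset.sum_insert hk, Finset.forall_mem_insert]
    constructor
    · rintro ⟨c, ⟨hck, hc⟩, rfl⟩
      exact ⟨c k, hck, c, hc, by abel⟩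
    · rintro ⟨t, ht, c, hc, hx⟩
      have hne : ∀ l ∈ S, l ≠ k := fun l hl h => hk (h ▸ hl)
      refine ⟨Function.update c k t, ⟨by simpa, fun l hl => ?_⟩, ?_⟩
      · rw [Function.update_of_ne (hne l hl)]
        exact hc l hl
      · rw [Function.update_self, Finset.sum_congr rfl fun l hl => by
          rw [Function.update_of_ne (hne l hl)], hx]
        abel

/-- The convex hull of a finite set is a polyhedron. -/
theorem isPolyhedron_convexHull [FiniteDimensional ℝ E] (S : Finset E) :
    IsPolyhedron (convexHull ℝ (S : Set E)) := by
  obtain ⟨ι, hι, μ, hμ⟩ := exists_polyhedralCone_eq_conicHull S fun s : E => (s, (1 : ℝ))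
  refine ⟨ι, hι, fun i => μ i ∘ₗ LinearMap.inl ℝ E ℝ, fun i => -μ i (0, 1), ?_⟩
  ext x
  have hx : (∃ c : E → ℝ, (∀ s ∈ S, 0 ≤ c s) ∧ ∑ s ∈ S, c s • (s, (1 : ℝ)) = (x, 1)) ↔
      ∀ i, μ i (x, 1) ≤ 0 := Set.ext_iff.1 hμ (x, 1)
  rw [Finset.mem_convexHull']
  simp only [Prod.smul_mk, smul_eq_mul, mul_one, Prod.ext_iff, Prod.fst_sum, Prod.snd_sum] at hx
  simp only [and_comm (a := ∑ s ∈ S, _ = (1 : ℝ)), hx, Set.mem_ofPred_eq, LinearMap.comp_apply,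
    LinearMap.inl_apply]
  refine forall_congr' fun i => ?_
  rw [show (x, (1 : ℝ)) = (x, 0) + (0, 1) by simp, map_add, le_neg_iff_add_nonpos_right]

theorem exists_add_sub_mem_of_notMem_extremePoints {P : Set E} (hP : Convex ℝ P) {v : E}
    (hv : v ∈ P) (hext : v ∉ P.extremePoints ℝ) :
    ∃ w ≠ 0, v + w ∈ P ∧ v - w ∈ P := by
  rw [mem_extremePoints] at hext
  push Not at hext
  obtain ⟨x, hx, y, hy, ⟨a, b, ha, hb, hab, rfl⟩, hne⟩ := hext hv
  have hxy : x ≠ y := by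
    rintro rfl
    have : a • x + b • x = x := by rw [← add_smul, hab, one_smul]
    exact hne this.symm this.symm
  have hm : 0 < min a b := lt_min ha hb
  refine ⟨min a b • (x - y), smul_ne_zero hm.ne' (sub_ne_zero.2 hxy), ?_, ?_⟩
  · have := hP hx hy (a := a + min a b) (b := b - min a b) (by linarith)
      (by linarith [min_le_right a b]) (by linarith)
    convert this using 1
    module
  · have := hP hx hy (a := a - min a b) (b := b + min a b) (by linarith [min_le_left a b])
      (by linarith) (by linarith)
    convert this using 1
    module

/-- The supporting cone of a polyhedron at one of its points is cut out by the constraints that are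
active there. -/
theorem supportingCone_eq_localCone {ι : Type} [Finite ι] (ν : ι → E →ₗ[ℝ] ℝ) (a : ι → ℝ) {v : E}
    (hv : ∀ i, ν i v ≤ a i) :
    {y | ∃ w : E, y = v + w ∧ ∃ ε : ℝ, 0 < ε ∧ v + ε • w ∈ {x | ∀ i, ν i x ≤ a i}} =
      localCone ν a v := by
  ext y
  constructor
  · rintro ⟨w, rfl, ε, hε, h⟩
    refine ⟨hv, fun i hi => ?_⟩
    have := h i
    rw [map_add, map_smul, hi, smul_eq_mul] at this
    rw [add_sub_cancel_left]
    nlinarith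
  · intro hy
    obtain ⟨ε, h, hε⟩ :=
      ((eventually_mem_iff_mem_localCone ν a v y).and self_mem_nhdsWithin).exists
    exact ⟨y - v, by abel, ε, hε, h.2 hy⟩

end Polyhedra

end BrionCone

theorem stmt_4
    (d : ℕ)
    -- P is a polytope: the convex hull of a finite set of points
    (S : Finset (Fin d → ℝ)) (P : Set (Fin d → ℝ))
    (hP : P = convexHull ℝ (↑S : Set (Fin d → ℝ)))
    -- T v is the supporting cone of P at v
    (T : (Fin d → ℝ) → Set (Fin d → ℝ))
    (hT : ∀ v, T v = {y | ∃ w : Fin d → ℝ,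
      y = v + w ∧ ∃ ε : ℝ, 0 < ε ∧ v + ε • w ∈ P}) :
    -- 𝟙_P − Σ_{v ∈ ext(P)} 𝟙_{T_v} lies in the span of indicators of shifted
    -- polyhedral cones containing a line
    (Set.indicator P (fun _ => (1 : ℝ)) -
        fun x => ∑ᶠ v ∈ Set.extremePoints ℝ P,
          Set.indicator (T v) (fun _ => (1 : ℝ)) x)
      ∈ Submodule.span ℝ {f : (Fin d → ℝ) → ℝ |
          ∃ (s : Fin d → ℝ) (C : Set (Fin d → ℝ)),
            (∃ (n : ℕ) (ν : Fin n → ((Fin d → ℝ) →ₗ[ℝ] ℝ)), C = {x | ∀ i, ν i x ≤ 0}) ∧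
            (∃ w : Fin d → ℝ, w ≠ 0 ∧ w ∈ C ∧ -w ∈ C) ∧
            f = Set.indicator ((fun y => s + y) '' C) (fun _ => (1 : ℝ))} := by
  classical
  obtain ⟨ι, _, ν, a, hν⟩ := BrionCone.isPolyhedron_convexHull S
  rw [← hP] at hν
  have hconv : Convex ℝ P := hP ▸ convex_convexHull ℝ _
  have hfin : (Set.extremePoints ℝ P).Finite :=
    S.finite_toSet.subset (hP ▸ extremePoints_convexHull_subset)
  have hmem : ∀ x, x ∈ P ↔ ∀ i, ν i x ≤ a i := fun x => by rw [hν]; rfl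
  have hTv : ∀ v ∈ hfin.toFinset, T v = BrionCone.localCone ν a v := fun v hv => by
    rw [hT, ← BrionCone.supportingCone_eq_localCone ν a
      ((hmem v).1 (extremePoints_subset (hfin.mem_toFinset.1 hv))), hν]
  have main := BrionCone.indicator_sub_sum_localCone_mem_lineConeSpan ν a hfin.toFinset
    fun v hv hvX => by
      obtain ⟨w, hw, h1, h2⟩ := BrionCone.exists_add_sub_mem_of_notMem_extremePoints hconv
        ((hmem v).2 hv) (fun h => hvX (hfin.mem_toFinset.2 h))
      exact ⟨w, hw, (hmem _).1 h1, (hmem _).1 h2⟩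
  rw [← hν, ← Finset.sum_congr rfl fun v hv =>
    congrArg (Set.indicator · fun _ => (1 : ℝ)) (hTv v hv)] at main
  have hsum : (fun x => ∑ᶠ v ∈ Set.extremePoints ℝ P, Set.indicator (T v) (fun _ => (1 : ℝ)) x) =
      ∑ v ∈ hfin.toFinset, (T v).indicator fun _ => (1 : ℝ) := by
    ext x
    rw [finsum_mem_eq_finite_toFinset_sum _ hfin, Finset.sum_apply]
  rw [hsum]
  refine Submodule.span_mono ?_ main
  rintro _ ⟨κ, _, μ, s, w, hw, hμw, rfl⟩
  have e := Finite.equivFin κ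
  refine ⟨s, {x | ∀ k, μ (e.symm k) x ≤ 0}, ⟨_, fun k => μ (e.symm k), rfl⟩,
    ⟨w, hw, fun k => (hμw _).le, fun k => by simp [hμw]⟩, ?_⟩
  congr 1
  ext x
  constructor
  · intro hx
    exact ⟨x - s, fun k => hx _, add_sub_cancel s x⟩
  · rintro ⟨y, hy, rfl⟩ k
    simpa using hy (e k)
end

section
/- Let d ≥ 1, let 0 ≤ k ≤ d − 1, let s_1, …, s_{d+1} ∈ ℝ^d be affinely independent, let 𝓛 be the family of subspaces L_I associated to subpartitions of {1, …, d+1} with blocks of size ≥ d − k + 1 (a family closed under sums), and let ρ be its patching function. Then for every subpartition I = {I_1, …, I_r}, ρ(L_I) = (−1)^{r−1} · ρ(L_{{I_1}}) · ρ(L_{{I_2}}) ⋯ ρ(L_{{I_r}}), where {I_l} denotes the single-block subpartition with block I_l. Moreover ρ(L_I) depends only on the block sizes |I_1|, …, |I_r|. -/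
open Finset

namespace Subpartition

variable {α : Type*}

/-- Possibly empty families of pairwise disjoint blocks of size at least `m`. -/
def IsSubp (m : ℕ) (I : Finset (Finset α)) : Prop :=
  (∀ J ∈ I, m ≤ J.card) ∧ (I : Set (Finset α)).Pairwise Disjoint

/-- Every block of `J` is contained in a block of `I`. -/
def Refines (J I : Finset (Finset α)) : Prop := ∀ B ∈ J, ∃ C ∈ I, B ⊆ C

open Classical in
/-- The subpartitions refining `I`. -/
noncomputable def below [Fintype α] (m : ℕ) (I : Finset (Finset α)) :
    Finset (Finset (Finset α)) :=
  univ.filter fun J => IsSubp m J ∧ Refines J I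

theorem mem_below [Fintype α] {m : ℕ} {I J : Finset (Finset α)} :
    J ∈ below m I ↔ IsSubp m J ∧ Refines J I := by
  simp [below]

theorem Refines.refl (I : Finset (Finset α)) : Refines I I := fun B hB => ⟨B, hB, Subset.rfl⟩

theorem Refines.trans {I J K : Finset (Finset α)} (h : Refines I J) (h' : Refines J K) :
    Refines I K := fun B hB => by
  obtain ⟨C, hC, hBC⟩ := h B hB
  obtain ⟨D, hD, hCD⟩ := h' C hC
  exact ⟨D, hD, hBC.trans hCD⟩

theorem IsSubp.eq_of_mem [DecidableEq α]
    {m : ℕ} {I : Finset (Finset α)} (hI : IsSubp m I) {B C : Finset α}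
    (hB : B ∈ I) (hC : C ∈ I) {x : α} (hxB : x ∈ B) (hxC : x ∈ C) : B = C := by
  by_contra h
  exact disjoint_left.1 (hI.2 hB hC h) hxB hxC

theorem IsSubp.nonempty {m : ℕ} (hm : 1 ≤ m) {I : Finset (Finset α)} (hI : IsSubp m I)
    {B : Finset α} (hB : B ∈ I) : B.Nonempty :=
  card_pos.1 (hm.trans (hI.1 B hB))

theorem IsSubp.mono {m : ℕ} {I J : Finset (Finset α)} (hI : IsSubp m I) (h : J ⊆ I) :
    IsSubp m J :=
  ⟨fun B hB => hI.1 B (h hB), hI.2.mono (by exact_mod_cast h)⟩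

theorem subset_of_refines [DecidableEq α]
    {m : ℕ} (hm : 1 ≤ m) {I J : Finset (Finset α)} (hI : IsSubp m I)
    (h : Refines I J) (h' : Refines J I) : I ⊆ J := by
  intro B hB
  obtain ⟨C, hC, hBC⟩ := h B hB
  obtain ⟨D, hD, hCD⟩ := h' C hC
  obtain ⟨x, hx⟩ := hI.nonempty hm hB
  have hBD : B = D := hI.eq_of_mem hB hD hx (hCD (hBC hx))
  rwa [hBC.antisymm (hBD ▸ hCD)]

theorem Refines.antisymm [DecidableEq α]
    {m : ℕ} (hm : 1 ≤ m) {I J : Finset (Finset α)} (hI : IsSubp m I)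
    (hJ : IsSubp m J) (h : Refines I J) (h' : Refines J I) : I = J :=
  (subset_of_refines hm hI h h').antisymm (subset_of_refines hm hJ h' h)

theorem self_mem_below [Fintype α]
    {m : ℕ} {I : Finset (Finset α)} (hI : IsSubp m I) : I ∈ below m I :=
  mem_below.2 ⟨hI, Refines.refl I⟩

/-- Induction along refinement. -/
theorem refine_induction [Fintype α] [DecidableEq α]
    {m : ℕ} (hm : 1 ≤ m) {P : Finset (Finset α) → Prop}
    (h : ∀ I, IsSubp m I → (∀ J ∈ below m I, J ≠ I → P J) → P I) :
    ∀ I, IsSubp m I → P I := by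
  intro I
  induction hn : (below m I).card using Nat.strong_induction_on generalizing I with
  | _ n ih =>
    intro hI
    refine h I hI fun J hJ hne => ?_
    obtain ⟨hJs, hJI⟩ := mem_below.1 hJ
    refine ih _ ?_ J rfl hJs
    rw [← hn]
    refine card_lt_card ⟨fun K hK => ?_, fun hsub => ?_⟩
    · obtain ⟨hK, hKJ⟩ := mem_below.1 hK
      exact mem_below.2 ⟨hK, hKJ.trans hJI⟩
    · exact hne (hJI.antisymm hm hJs hI (mem_below.1 (hsub (self_mem_below hI))).2)

theorem eq_of_sum_below_eq_of_forall [Fintype α] [DecidableEq α]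
    {m : ℕ} {I : Finset (Finset α)} (hI : IsSubp m I)
    {g h : Finset (Finset α) → ℝ} (hsum : ∑ J ∈ below m I, g J = ∑ J ∈ below m I, h J)
    (hlt : ∀ J ∈ below m I, J ≠ I → g J = h J) : g I = h I := by
  rw [← add_sum_erase _ _ (self_mem_below hI), ← add_sum_erase _ h (self_mem_below hI),
    sum_congr rfl fun J hJ => hlt J (mem_of_mem_erase hJ) (ne_of_mem_erase hJ)] at hsum
  exact add_right_cancel hsum

/-- Subpartitions refining a disjoint union split into two parts. -/
theorem sum_below_insert [Fintype α] [DecidableEq α]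
    {m : ℕ} (hm : 1 ≤ m) {I : Finset (Finset α)} {C : Finset α}
    (hC : C ∉ I) (hI : IsSubp m (insert C I)) (a : Finset α → ℝ) :
    ∑ J ∈ below m (insert C I), ∏ B ∈ J, a B =
      (∑ J ∈ below m {C}, ∏ B ∈ J, a B) * ∑ J ∈ below m I, ∏ B ∈ J, a B := by
  have hdisj : ∀ D ∈ I, Disjoint C D := fun D hD =>
    hI.2 (by simp) (by simp [hD]) (fun h => hC (h ▸ hD))
  have hns : ∀ {J}, J ∈ below m I → ∀ B ∈ J, ¬ B ⊆ C := by
    intro J hJ B hB hBC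
    obtain ⟨hJ, hJI⟩ := mem_below.1 hJ
    obtain ⟨D, hD, hBD⟩ := hJI B hB
    obtain ⟨x, hx⟩ := hJ.nonempty hm hB
    exact disjoint_left.1 (hdisj D hD) (hBC hx) (hBD hx)
  have hsub : ∀ {J}, J ∈ below m {C} → ∀ B ∈ J, B ⊆ C := by
    intro J hJ B hB
    simpa using (mem_below.1 hJ).2 B hB
  rw [sum_mul_sum, ← sum_product']
  refine sum_bij' (fun J _ => (J.filter (· ⊆ C), J.filter (¬ · ⊆ C))) (fun p _ => p.1 ∪ p.2)
    ?_ ?_ ?_ ?_ ?_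
  · intro J hJ
    obtain ⟨hJ, hJI⟩ := mem_below.1 hJ
    refine mem_product.2 ⟨mem_below.2 ⟨hJ.mono (filter_subset _ _), fun B hB => ?_⟩,
      mem_below.2 ⟨hJ.mono (filter_subset _ _), fun B hB => ?_⟩⟩
    · exact ⟨C, by simp, (mem_filter.1 hB).2⟩
    · obtain ⟨hB, hBC⟩ := mem_filter.1 hB
      obtain ⟨D, hD, hBD⟩ := hJI B hB
      rcases mem_insert.1 hD with rfl | hD
      · exact absurd hBD hBC
      · exact ⟨D, hD, hBD⟩
  · rintro ⟨J, K⟩ hJK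
    obtain ⟨hJ, hK⟩ := mem_product.1 hJK
    have hJ' := mem_below.1 hJ
    have hK' := mem_below.1 hK
    have hJK : ∀ B ∈ J, ∀ D ∈ K, Disjoint B D := by
      intro B hB D hD
      obtain ⟨E, hE, hDE⟩ := hK'.2 D hD
      exact disjoint_of_subset_left (hsub hJ B hB) (disjoint_of_subset_right hDE (hdisj E hE))
    refine mem_below.2 ⟨⟨fun B hB => ?_, ?_⟩, fun B hB => ?_⟩
    · rcases mem_union.1 hB with hB | hB
      exacts [hJ'.1.1 B hB, hK'.1.1 B hB]
    · intro B hB D hD hne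
      rcases mem_union.1 (mem_coe.1 hB) with hB | hB <;>
        rcases mem_union.1 (mem_coe.1 hD) with hD | hD
      exacts [hJ'.1.2 hB hD hne, hJK B hB D hD, (hJK D hD B hB).symm, hK'.1.2 hB hD hne]
    · rcases mem_union.1 hB with hB | hB
      · exact ⟨C, by simp, hsub hJ B hB⟩
      · obtain ⟨D, hD, hBD⟩ := hK'.2 B hB
        exact ⟨D, by simp [hD], hBD⟩
  · intro J _
    exact filter_union_filter_not_eq _ _
  · rintro ⟨J, K⟩ hJK
    obtain ⟨hJ, hK⟩ := mem_product.1 hJK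
    have h1 := hsub hJ
    have h2 := hns hK
    ext B
    · simp only [mem_filter, mem_union]
      exact ⟨fun h => h.1.resolve_right fun h' => h2 B h' h.2, fun h => ⟨.inl h, h1 B h⟩⟩
    · simp only [mem_filter, mem_union]
      exact ⟨fun h => h.1.resolve_left fun h' => h.2 (h1 B h'), fun h => ⟨.inr h, h2 B h⟩⟩
  · intro J _
    exact (prod_filter_mul_prod_filter_not J _ a).symm

theorem isSubp_map (m : ℕ) (σ : Equiv.Perm α) (I : Finset (Finset α)) :
    IsSubp m (σ.finsetCongr.finsetCongr I) ↔ IsSubp m I := by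
  have hcoe : (σ.finsetCongr.finsetCongr I : Set (Finset α)) = σ.finsetCongr '' I := by
    rw [Equiv.finsetCongr_apply, coe_map]
    rfl
  refine and_congr ?_ ?_
  · simp only [Equiv.finsetCongr_apply, forall_mem_map, Equiv.coe_toEmbedding, card_map]
  · rw [hcoe, Set.InjOn.pairwise_image (Equiv.injective _).injOn]
    simp only [Set.Pairwise, Function.onFun, Equiv.finsetCongr_apply, disjoint_map]

theorem refines_map (σ : Equiv.Perm α) (I J : Finset (Finset α)) :
    Refines (σ.finsetCongr.finsetCongr J) (σ.finsetCongr.finsetCongr I) ↔ Refines J I := by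
  simp only [Refines, Equiv.finsetCongr_apply, mem_map, exists_exists_and_eq_and,
    forall_exists_index, and_imp, forall_apply_eq_imp_iff₂, Equiv.coe_toEmbedding, map_subset_map]

variable {m : ℕ} {g : Finset (Finset α) → ℝ}

/-- A function whose sums over refinements vanish is multiplicative over blocks. -/
theorem eq_prod_of_sum_below_eq_zero [Fintype α] [DecidableEq α] (hm : 1 ≤ m) (h0 : g ∅ = 1)
    (hg : ∀ I, IsSubp m I → I.Nonempty → ∑ J ∈ below m I, g J = 0) :
    ∀ I, IsSubp m I → g I = ∏ B ∈ I, g {B} := by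
  refine refine_induction hm fun I hI ih => ?_
  rcases I.eq_empty_or_nonempty with rfl | ⟨C, hC⟩
  · simpa using h0
  by_cases hIC : I = {C}
  · simp [hIC]
  refine eq_of_sum_below_eq_of_forall hI ?_ ih
  have hCs : IsSubp m {C} := hI.mono (by simpa using hC)
  have hCI : Refines {C} I := fun B hB => ⟨C, hC, by rw [mem_singleton.1 hB]⟩
  have hz : ∑ J ∈ below m {C}, ∏ B ∈ J, g {B} = 0 := by
    rw [← hg {C} hCs (by simp)]
    refine sum_congr rfl fun J hJ => (ih J ?_ ?_).symm
    · exact mem_below.2 ⟨(mem_below.1 hJ).1, (mem_below.1 hJ).2.trans hCI⟩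
    · rintro rfl
      exact hIC ((mem_below.1 hJ).2.antisymm hm hI hCs hCI)
  rw [hg I hI ⟨C, hC⟩]
  have := sum_below_insert hm (notMem_erase C I) (by rwa [insert_erase hC]) fun B => g {B}
  rw [insert_erase hC, hz, zero_mul] at this
  exact this.symm

theorem map_eq_of_sum_below_eq_zero [Fintype α] [DecidableEq α] (hm : 1 ≤ m)
    (hg : ∀ I, IsSubp m I → I.Nonempty → ∑ J ∈ below m I, g J = 0) (σ : Equiv.Perm α) :
    ∀ I, IsSubp m I → g (σ.finsetCongr.finsetCongr I) = g I := by
  refine refine_induction hm fun I hI ih => ?_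
  rcases I.eq_empty_or_nonempty with rfl | hne
  · simp
  refine eq_of_sum_below_eq_of_forall (g := fun J => g (σ.finsetCongr.finsetCongr J)) hI ?_ ih
  rw [hg I hI hne, ← hg (σ.finsetCongr.finsetCongr I) ((isSubp_map m σ I).2 hI) (by simpa)]
  refine sum_equiv σ.finsetCongr.finsetCongr (fun J => ?_) fun J _ => rfl
  rw [mem_below, mem_below, isSubp_map, refines_map]

theorem singleton_eq_of_card_eq [Fintype α] [DecidableEq α] (hm : 1 ≤ m)
    (hg : ∀ I, IsSubp m I → I.Nonempty → ∑ J ∈ below m I, g J = 0) {B C : Finset α}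
    (hB : m ≤ B.card) (h : B.card = C.card) : g {B} = g {C} := by
  obtain ⟨σ, hσ⟩ : ∃ σ : Equiv.Perm α, B.map σ.toEmbedding = C := by
    let e : {x // x ∈ B} ≃ {x // x ∈ C} := Finset.equivOfCardEq h
    refine ⟨e.extendSubtype, eq_of_subset_of_card_le (fun x hx => ?_) (by simp [h])⟩
    obtain ⟨y, hy, rfl⟩ := mem_map.1 hx
    exact e.extendSubtype_mem y hy
  have hs : IsSubp m ({B} : Finset (Finset α)) := ⟨by simpa using hB, by simp⟩
  rw [← map_eq_of_sum_below_eq_zero hm hg σ {B} hs]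
  simp [hσ]

theorem eq_of_map_card_eq [Fintype α] [DecidableEq α] (hm : 1 ≤ m) (h0 : g ∅ = 1)
    (hg : ∀ I, IsSubp m I → I.Nonempty → ∑ J ∈ below m I, g J = 0) {I I' : Finset (Finset α)}
    (hI : IsSubp m I) (hI' : IsSubp m I')
    (h : Multiset.map Finset.card I.val = Multiset.map Finset.card I'.val) : g I = g I' := by
  classical
  let f : ℕ → ℝ := fun n => if h : ∃ B : Finset α, m ≤ B.card ∧ B.card = n then g {h.choose} else 0
  have hf : ∀ B : Finset α, m ≤ B.card → g {B} = f B.card := by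
    intro B hB
    have hex : ∃ D : Finset α, m ≤ D.card ∧ D.card = B.card := ⟨B, hB, rfl⟩
    simp only [f, dif_pos hex]
    exact singleton_eq_of_card_eq hm hg hB hex.choose_spec.2.symm
  have key : ∀ K, IsSubp m K → g K = ((Multiset.map Finset.card K.val).map f).prod := by
    intro K hK
    rw [eq_prod_of_sum_below_eq_zero hm h0 hg K hK, prod_congr rfl fun B hB => hf B (hK.1 B hB),
      Multiset.map_map]
    rfl
  rw [key I hI, key I' hI', h]

/-- Functionals take arbitrary prescribed values on an affinely independent family,
up to a common constant. -/
theorem exists_dual_sub_eq {V : Type*} [AddCommGroup V] [Module ℝ V] {s : α → V}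
    (hs : AffineIndependent ℝ s) (f : α → ℝ) :
    ∃ ξ : Module.Dual ℝ V, ∀ i j, ξ (s i) = ξ (s j) ↔ f i = f j := by
  rcases isEmpty_or_nonempty α with h | ⟨⟨o⟩⟩
  · exact ⟨0, fun i => h.elim i⟩
  have hli := (affineIndependent_iff_linearIndependent_vsub ℝ s o).1 hs
  obtain ⟨ξ, hξ⟩ := LinearMap.exists_extend
    ((Module.Basis.span hli).constr ℝ fun i : {x // x ≠ o} => f i - f o)
  have hval : ∀ i, ξ (s i) - ξ (s o) = f i - f o := by
    intro i
    by_cases hi : i = o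
    · simp [hi]
    have := LinearMap.congr_fun hξ (Module.Basis.span hli ⟨i, hi⟩)
    rw [Module.Basis.constr_basis, LinearMap.comp_apply, Submodule.subtype_apply,
      Module.Basis.span_apply] at this
    simpa using this
  refine ⟨ξ, fun i j => ?_⟩
  have hi := hval i
  have hj := hval j
  constructor <;> intro h <;> linarith

/-- Some labelling of the points is constant exactly on the blocks of `I`. -/
theorem exists_labelling [Fintype α] [DecidableEq α]
    (hm : 2 ≤ m) {I : Finset (Finset α)} (hI : IsSubp m I) :
    ∃ f : α → ℝ, ∀ J, IsSubp m J → ((∀ B ∈ J, ∀ i ∈ B, ∀ j ∈ B, f i = f j) ↔ Refines J I) := by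
  let c : α → Finset α := fun i => univ.filter fun j => j = i ∨ ∃ C ∈ I, i ∈ C ∧ j ∈ C
  let f : α → ℝ := fun i => (Fintype.equivFin (Finset α) (c i) : ℕ)
  have hf : ∀ i j, f i = f j → j = i ∨ ∃ C ∈ I, i ∈ C ∧ j ∈ C := by
    intro i j h
    have hc : c i = c j := (Fintype.equivFin (Finset α)).injective (Fin.ext (Nat.cast_injective h))
    have : j ∈ c i := by rw [hc]; simp [c]
    simpa [c] using this
  have hf' : ∀ C ∈ I, ∀ i ∈ C, ∀ j ∈ C, f i = f j := by
    have hc : ∀ C ∈ I, ∀ i ∈ C, c i = C := by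
      intro C hC i hi
      ext j
      simp only [c, mem_filter, mem_univ, true_and]
      constructor
      · rintro (rfl | ⟨D, hD, hiD, hjD⟩)
        · exact hi
        · rwa [hI.eq_of_mem hC hD hi hiD]
      · exact fun hj => .inr ⟨C, hC, hi, hj⟩
    intro C hC i hi j hj
    simp only [f, hc C hC i hi, hc C hC j hj]
  refine ⟨f, fun J hJ => ⟨fun h B hB => ?_, fun h B hB i hi j hj => ?_⟩⟩
  · obtain ⟨i, hi, j, hj, hij⟩ := one_lt_card.1 (show 1 < B.card from hm.trans (hJ.1 B hB))
    obtain ⟨C, hC, hiC, hjC⟩ := (hf i j (h B hB i hi j hj)).resolve_left (Ne.symm hij)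
    refine ⟨C, hC, fun l hl => ?_⟩
    rcases hf i l (h B hB i hi l hl) with rfl | ⟨D, hD, hiD, hlD⟩
    · exact hiC
    · rwa [hI.eq_of_mem hC hD hiC hiD]
  · obtain ⟨C, hC, hBC⟩ := h B hB
    exact hf' C hC i (hBC hi) j (hBC hj)

end Subpartition

open Subpartition

theorem stmt_14
    (d k : ℕ) (hd : 1 ≤ d) (hk : k + 1 ≤ d)
    -- affinely independent points s_1, …, s_{d+1}
    (s : Fin (d + 1) → (Fin d → ℝ)) (hs : AffineIndependent ℝ s)
    -- the subspace associated to a block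
    (blockSpan : Finset (Fin (d + 1)) → Submodule ℝ (Fin d → ℝ))
    (hblock : ∀ J, blockSpan J =
      Submodule.span ℝ {x : Fin d → ℝ | ∃ i ∈ J, ∃ j ∈ J, x = s i - s j})
    -- subpartitions with blocks of size ≥ d − k + 1
    (IsSubpartition : Finset (Finset (Fin (d + 1))) → Prop)
    (hsub : ∀ I, IsSubpartition I ↔
      I.Nonempty ∧ (∀ J ∈ I, d - k + 1 ≤ J.card) ∧
        (↑I : Set (Finset (Fin (d + 1)))).Pairwise Disjoint)
    -- the family 𝓛 of subspaces L_I associated to subpartitions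
    (𝓛 : Set (Submodule ℝ (Fin d → ℝ)))
    (h𝓛 : ∀ M, M ∈ 𝓛 ↔ ∃ I, IsSubpartition I ∧ M = I.sup blockSpan)
    -- this family is closed under sums
    (hclosed : ∀ M₁ ∈ 𝓛, ∀ M₂ ∈ 𝓛, M₁ ⊔ M₂ ∈ 𝓛)
    -- ρ is its patching function
    (ρ : Submodule ℝ (Fin d → ℝ) → ℝ)
    (hρ : ∀ ξ : Module.Dual ℝ (Fin d → ℝ),
      Set.indicator
        (⋃ M ∈ 𝓛, ((Submodule.dualAnnihilator M : Submodule ℝ (Module.Dual ℝ (Fin d → ℝ))) :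
          Set (Module.Dual ℝ (Fin d → ℝ)))) (fun _ => (1 : ℝ)) ξ =
      ∑ᶠ M ∈ 𝓛,
        ρ M * Set.indicator
          ((M.dualAnnihilator : Submodule ℝ (Module.Dual ℝ (Fin d → ℝ))) :
            Set (Module.Dual ℝ (Fin d → ℝ))) (fun _ => (1 : ℝ)) ξ)
    :
    ∀ I : Finset (Finset (Fin (d + 1))), IsSubpartition I →
      -- ρ(L_I) is the signed product of the ρ-values of the single blocks
      (ρ (I.sup blockSpan) =
        (-1 : ℝ) ^ (I.card - 1) * ∏ J ∈ I, ρ (Finset.sup {J} blockSpan)) ∧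
      -- ρ(L_I) depends only on the multiset of block sizes
      (∀ I' : Finset (Finset (Fin (d + 1))), IsSubpartition I' →
        Multiset.map Finset.card I.val = Multiset.map Finset.card I'.val →
        ρ (I.sup blockSpan) = ρ (I'.sup blockSpan)) := by
  classical
  have hm : 2 ≤ d - k + 1 := by omega
  have hm1 : 1 ≤ d - k + 1 := by omega
  generalize d - k + 1 = m at hm hm1 hsub
  have hsub' : ∀ I, IsSubpartition I ↔ I.Nonempty ∧ IsSubp m I := hsub
  have hann : ∀ (ξ : Module.Dual ℝ (Fin d → ℝ)) (J : Finset (Finset (Fin (d + 1)))),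
      ξ ∈ (J.sup blockSpan).dualAnnihilator ↔
        ∀ B ∈ J, ∀ i ∈ B, ∀ j ∈ B, ξ (s i) = ξ (s j) := by
    intro ξ J
    have hker : ξ ∈ (J.sup blockSpan).dualAnnihilator ↔ J.sup blockSpan ≤ LinearMap.ker ξ := by
      rw [Submodule.mem_dualAnnihilator]
      rfl
    rw [hker, Finset.sup_le_iff]
    refine forall₂_congr fun B _ => ?_
    rw [hblock, Submodule.span_le]
    constructor
    · intro h i hi j hj
      have : s i - s j ∈ LinearMap.ker ξ := h ⟨i, hi, j, hj, rfl⟩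
      rwa [LinearMap.mem_ker, map_sub, sub_eq_zero] at this
    · rintro h _ ⟨i, hi, j, hj, rfl⟩
      rw [SetLike.mem_coe, LinearMap.mem_ker, map_sub, h i hi j hj, sub_self]
  have hgen : ∀ I, IsSubp m I → ∃ ξ : Module.Dual ℝ (Fin d → ℝ), ∀ J, IsSubp m J →
      (ξ ∈ (J.sup blockSpan).dualAnnihilator ↔ Refines J I) := by
    intro I hI
    obtain ⟨f, hf⟩ := exists_labelling hm hI
    obtain ⟨ξ, hξ⟩ := exists_dual_sub_eq hs f
    refine ⟨ξ, fun J hJ => ?_⟩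
    simp only [hann, hξ, hf J hJ]
  have hrefines : ∀ I J, IsSubp m I → IsSubp m J → I.sup blockSpan = J.sup blockSpan →
      Refines I J := by
    intro I J hI hJ h
    obtain ⟨ξ, hξ⟩ := hgen J hJ
    rw [← hξ I hI, h, hξ J hJ]
    exact Refines.refl J
  let S : Finset (Finset (Finset (Fin (d + 1)))) := univ.filter IsSubpartition
  have hS : ∀ {I}, I ∈ S ↔ I.Nonempty ∧ IsSubp m I := by simp [S, hsub']
  have hinj : Set.InjOn (fun I => I.sup blockSpan) (S : Set (Finset (Finset (Fin (d + 1))))) := by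
    intro I hI J hJ h
    have hI' := (hS.1 (mem_coe.1 hI)).2
    have hJ' := (hS.1 (mem_coe.1 hJ)).2
    exact (hrefines I J hI' hJ' h).antisymm hm1 hI' hJ' (hrefines J I hJ' hI' h.symm)
  have h𝓛S : 𝓛 = (fun I => I.sup blockSpan) '' (S : Set (Finset (Finset (Fin (d + 1))))) := by
    ext M
    simp [h𝓛, S, eq_comm]
  let g : Finset (Finset (Fin (d + 1))) → ℝ := fun I =>
    if I = ∅ then 1 else -ρ (I.sup blockSpan)
  have hg0 : g ∅ = 1 := if_pos rfl
  have hgne : ∀ {I}, I.Nonempty → g I = -ρ (I.sup blockSpan) := fun h => if_neg h.ne_empty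
  have hg : ∀ I, IsSubp m I → I.Nonempty → ∑ J ∈ below m I, g J = 0 := by
    intro I hI hne
    obtain ⟨ξ, hξ⟩ := hgen I hI
    have hsum := hρ ξ
    rw [Set.indicator_of_mem, h𝓛S, finsum_mem_image hinj, finsum_mem_coe_finset] at hsum
    · have hempty : (∅ : Finset (Finset (Fin (d + 1)))) ∈ below m I :=
        mem_below.2 ⟨⟨by simp, by simp⟩, by simp [Refines]⟩
      have hbelow : (below m I).erase ∅ = S.filter fun J => Refines J I := by
        ext J
        rw [mem_erase, mem_below, mem_filter, hS, nonempty_iff_ne_empty, and_assoc]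
      rw [← add_sum_erase _ _ hempty, hg0, hbelow, hsum, sum_filter (s := S), ← sum_add_distrib]
      refine sum_eq_zero fun J hJ => ?_
      obtain ⟨hJne, hJ⟩ := hS.1 hJ
      by_cases hJI : Refines J I
      · rw [Set.indicator_of_mem ((hξ J hJ).2 hJI), if_pos hJI, hgne hJne]
        ring
      · rw [Set.indicator_of_notMem (fun h => hJI ((hξ J hJ).1 h)), if_neg hJI]
        ring
    · exact Set.mem_biUnion ((h𝓛 _).2 ⟨I, (hsub' I).2 ⟨hne, hI⟩, rfl⟩)
        ((hξ I hI).2 (Refines.refl I))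
  intro I hI
  obtain ⟨hne, hIs⟩ := (hsub' I).1 hI
  refine ⟨?_, fun I' hI' hcard => ?_⟩
  · have hprod := eq_prod_of_sum_below_eq_zero hm1 hg0 hg I hIs
    rw [hgne hne, prod_congr rfl fun B _ => hgne (singleton_nonempty B), prod_neg] at hprod
    obtain ⟨n, hn⟩ : ∃ n, I.card = n + 1 := ⟨I.card - 1, by have := hne.card_pos; omega⟩
    rw [hn, pow_succ] at hprod
    rw [hn, Nat.add_sub_cancel]
    linear_combination -hprod
  · obtain ⟨hne', hIs'⟩ := (hsub' I').1 hI'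
    have := eq_of_map_card_eq hm1 hg0 hg hIs hIs' hcard
    rwa [hgne hne, hgne hne', neg_inj] at this
end
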